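/- arXiv:2010.10514 — 12 statements merged into one kernel-verified Lean document; each statement's English description precedes it below -/
import Mathlib

section
/- A pair (f, τ), with f = {f_n}_n a sequence in X* and τ = {τ_n}_n a sequence in X, is a p-ASF for X if and only if there exist bounded linear operators U : X → ℓ^p(ℕ) and V : ℓ^p(ℕ) → X such that V ∘ U : X → X is bounded invertible and f_n = h_n ∘ U and τ_n = V e_n for all n ∈ ℕ. -/
open scoped ENNReal

/-- A p-approximate Schauder frame (p-ASF) for a Banach space `X`:
functionals `f`, vectors `τ`, an invertible frame operator `S` with
`S x = ∑ f n x • τ n`, a bounded analysis operator `θf` into `ℓ^p(ℕ)`,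
and a bounded synthesis operator `θτ` from `ℓ^p(ℕ)`. -/
structure pASF (p : ℝ≥0∞) [Fact (1 ≤ p)] (X : Type*) [NormedAddCommGroup X]
    [NormedSpace ℝ X] where
  f : ℕ → X →L[ℝ] ℝ
  τ : ℕ → X
  S : X ≃L[ℝ] X
  hS : ∀ x : X, HasSum (fun n => f n x • τ n) (S x)
  θf : X →L[ℝ] lp (fun _ : ℕ => ℝ) p
  hθf : ∀ (x : X) (n : ℕ), (θf x : ℕ → ℝ) n = f n x
  θτ : lp (fun _ : ℕ => ℝ) p →L[ℝ] X
  hθτ : ∀ a : lp (fun _ : ℕ => ℝ) p, HasSum (fun n => (a : ℕ → ℝ) n • τ n) (θτ a)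
/-- a pair `(f, τ)` is a p-ASF iff `f n = h n ∘ U`, `τ n = V e n`
for bounded operators `U : X → ℓ^p`, `V : ℓ^p → X` with `V ∘ U` bounded invertible.
Here `e n = lp.single p n 1` and `h n` is the n-th coordinate functional. -/
theorem stmt_3 {X : Type*} [NormedAddCommGroup X] [NormedSpace ℝ X] [CompleteSpace X]
    (p : ℝ≥0∞) [Fact (1 ≤ p)] (hp : p ≠ ∞) (f : ℕ → X →L[ℝ] ℝ) (τ : ℕ → X) :
    (∃ F : pASF p X, F.f = f ∧ F.τ = τ) ↔
    ∃ (U : X →L[ℝ] lp (fun _ : ℕ => ℝ) p) (V : lp (fun _ : ℕ => ℝ) p →L[ℝ] X)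
      (W : X ≃L[ℝ] X),
        (W : X →L[ℝ] X) = V.comp U ∧
        (∀ (n : ℕ) (x : X), f n x = (U x : ℕ → ℝ) n) ∧
        (∀ n : ℕ, τ n = V (lp.single p n 1)) := by
  have key : ∀ (V : lp (fun _ : ℕ => ℝ) p →L[ℝ] X) (a : lp (fun _ : ℕ => ℝ) p),
      HasSum (fun n => (a : ℕ → ℝ) n • V (lp.single p n 1)) (V a) := by
    intro V a
    have h := (lp.hasSum_single hp a).mapL V
    convert h using 2 with n
    rw [← map_smul, ← lp.single_smul, smul_eq_mul, mul_one]
  constructor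
  · rintro ⟨F, rfl, rfl⟩
    refine ⟨F.θf, F.θτ, F.S, ?_, fun n x => (F.hθf x n).symm, ?_⟩
    · ext x
      have h := F.hθτ (F.θf x)
      simp only [F.hθf] at h
      exact (F.hS x).unique h
    · intro n
      have h := F.hθτ (lp.single p n 1)
      have h2 := hasSum_single (f := fun m => (lp.single p n (1 : ℝ) : lp (fun _ : ℕ => ℝ) p) m • F.τ m) n
        (fun m hm => by rw [lp.single_apply_ne p n _ hm, zero_smul])
      have h3 := h2.unique h
      rw [lp.single_apply_self, one_smul] at h3
      exact h3
  · rintro ⟨U, V, W, hW, hf, hτ⟩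
    have hs : ∀ a : lp (fun _ : ℕ => ℝ) p, HasSum (fun n => (a : ℕ → ℝ) n • τ n) (V a) := by
      intro a
      simp only [hτ]
      exact key V a
    refine ⟨⟨f, τ, W, ?_, U, fun x n => (hf n x).symm, V, hs⟩, rfl, rfl⟩
    intro x
    have h := hs (U x)
    have hx : W x = V (U x) := DFunLike.congr_fun hW x
    rw [hx]
    simp only [hf]
    exact h
end

section
/- Let (f, τ) be a p-ASF for X. Suppose {τ_n}_n is a Schauder basis for X (every x ∈ X has a unique norm-convergent expansion x = ∑_{n=1}^∞ a_n τ_n with scalars a_n) and f_k(τ_n) = δ_{k,n} for all k, n ∈ ℕ. Then (f, τ) has a unique dual: if (g, ω) and (u, ρ) are both dual p-ASFs of (f, τ), then g_n = u_n and ω_n = ρ_n for all n ∈ ℕ. -/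
open scoped ENNReal

/-- `G` is a dual p-ASF of `F`: `x = ∑ G.f n x • F.τ n = ∑ F.f n x • G.τ n`. -/
def pASF.IsDual {p : ℝ≥0∞} [Fact (1 ≤ p)] {X : Type*} [NormedAddCommGroup X]
    [NormedSpace ℝ X] (F G : pASF p X) : Prop :=
  ∀ x : X, HasSum (fun n => G.f n x • F.τ n) x ∧ HasSum (fun n => F.f n x • G.τ n) x

/-- if `τ` is a Schauder basis of `X` and `f k (τ n) = δ_{k,n}`,
then the p-ASF `(f, τ)` has a unique dual. -/
theorem stmt_7 {X : Type*} [NormedAddCommGroup X] [NormedSpace ℝ X] [CompleteSpace X]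
    (p : ℝ≥0∞) [Fact (1 ≤ p)] (hp : p ≠ ∞) (F : pASF p X)
    (hbasis : ∀ x : X, ∃! a : ℕ → ℝ, HasSum (fun n => a n • F.τ n) x)
    (hdelta : ∀ k n : ℕ, F.f k (F.τ n) = if k = n then 1 else 0)
    (G H : pASF p X) (hG : F.IsDual G) (hH : F.IsDual H) :
    (∀ n, G.f n = H.f n) ∧ (∀ n, G.τ n = H.τ n) := by
  refine ⟨fun n => ContinuousLinearMap.ext fun x => ?_, fun n => ?_⟩
  · exact congrFun ((hbasis x).unique (hG x).1 (hH x).1) n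
  · have key : ∀ K : pASF p X, F.IsDual K → K.τ n = F.τ n := by
      intro K hK
      have h := (hK (F.τ n)).2
      have h2 : HasSum (fun k => F.f k (F.τ n) • K.τ k) (F.f n (F.τ n) • K.τ n) := by
        apply hasSum_single
        intro k hk
        rw [hdelta, if_neg hk, zero_smul]
      have h3 := h2.unique h
      rwa [hdelta, if_pos rfl, one_smul] at h3
    rw [key G hG, key H hH]
end

section
/- Let (f, τ) be a p-ASF for X. Then a p-ASF (g, ω) for X is a dual of (f, τ) if and only if g_n = h_n ∘ U and ω_n = V e_n for all n ∈ ℕ, where U : X → ℓ^p(ℕ) is a bounded right-inverse of θ_τ (i.e., θ_τ ∘ U = I_X), V : ℓ^p(ℕ) → X is a bounded left-inverse of θ_f (i.e., V ∘ θ_f = I_X), and V ∘ U : X → X is bounded invertible. -/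
open scoped ENNReal

/-- a p-ASF `(g, ω)` is a dual of `(f, τ)` iff `g n = h n ∘ U` and
`ω n = V (e n)` where `U` is a bounded right-inverse of `θ_τ`, `V` is a bounded
left-inverse of `θ_f`, and `V ∘ U` is bounded invertible. -/
theorem stmt_9 {X : Type*} [NormedAddCommGroup X] [NormedSpace ℝ X] [CompleteSpace X]
    (p : ℝ≥0∞) [Fact (1 ≤ p)] (hp : p ≠ ∞) (F G : pASF p X) :
    F.IsDual G ↔
    ∃ (U : X →L[ℝ] lp (fun _ : ℕ => ℝ) p) (V : lp (fun _ : ℕ => ℝ) p →L[ℝ] X),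
      F.θτ.comp U = ContinuousLinearMap.id ℝ X ∧
      V.comp F.θf = ContinuousLinearMap.id ℝ X ∧
      (∃ W : X ≃L[ℝ] X, (W : X →L[ℝ] X) = V.comp U) ∧
      (∀ (n : ℕ) (x : X), G.f n x = (U x : ℕ → ℝ) n) ∧
      (∀ n : ℕ, G.τ n = V (lp.single p n 1)) := by
  constructor
  · intro h
    refine ⟨G.θf, G.θτ, ?_, ?_, ⟨G.S, ?_⟩, fun n x => (G.hθf x n).symm, fun n => ?_⟩
    · ext x
      have h1 := F.hθτ (G.θf x)
      simp only [G.hθf] at h1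
      exact h1.unique (h x).1
    · ext x
      have h1 := G.hθτ (F.θf x)
      simp only [F.hθf] at h1
      exact h1.unique (h x).2
    · ext x
      have h1 := G.hθτ (G.θf x)
      simp only [G.hθf] at h1
      exact (G.hS x).unique h1
    · have h1 := G.hθτ (lp.single p n 1)
      have h2 := hasSum_single (f := fun m => (lp.single p n (1 : ℝ) : lp (fun _ : ℕ => ℝ) p) m • G.τ m) n
        (fun m hm => by simp [Pi.single_eq_of_ne hm])
      have h3 := h2.unique h1
      rw [← h3]
      simp
  · rintro ⟨U, V, hU, hV, -, hg, hw⟩ x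
    constructor
    · have h1 := F.hθτ (U x)
      have h2 : F.θτ (U x) = x := DFunLike.congr_fun hU x
      rw [h2] at h1
      simpa only [hg] using h1
    · have h1 := (lp.hasSum_single hp (F.θf x)).mapL V
      have h2 : V (F.θf x) = x := DFunLike.congr_fun hV x
      rw [h2] at h1
      convert h1 using 2 with n
      rw [hw, ← map_smul, ← lp.single_smul, F.hθf]
      simp
end

section
/- Let (f, τ) be a p-ASF for X. A bounded linear operator R : X → ℓ^p(ℕ) satisfies θ_τ ∘ R = I_X (i.e., R is a bounded right-inverse of θ_τ) if and only if R = θ_f ∘ S_{f,τ}^{-1} + (I_{ℓ^p(ℕ)} − θ_f ∘ S_{f,τ}^{-1} ∘ θ_τ) ∘ U for some bounded linear operator U : X → ℓ^p(ℕ). -/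
open scoped ENNReal

/-- characterization of bounded right-inverses of `θ_τ`. -/
theorem stmt_10 {X : Type*} [NormedAddCommGroup X] [NormedSpace ℝ X] [CompleteSpace X]
    (p : ℝ≥0∞) [Fact (1 ≤ p)] (hp : p ≠ ∞) (F : pASF p X)
    (R : X →L[ℝ] lp (fun _ : ℕ => ℝ) p) :
    F.θτ.comp R = ContinuousLinearMap.id ℝ X ↔
    ∃ U : X →L[ℝ] lp (fun _ : ℕ => ℝ) p,
      R = F.θf.comp (F.S.symm : X →L[ℝ] X) +
        (ContinuousLinearMap.id ℝ (lp (fun _ : ℕ => ℝ) p) -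
          F.θf.comp ((F.S.symm : X →L[ℝ] X).comp F.θτ)).comp U := by
  have h : ∀ x, F.θτ (F.θf x) = F.S x := fun x => by
    have h1 := F.hθτ (F.θf x)
    simp only [F.hθf] at h1
    exact h1.unique (F.hS x)
  constructor
  · intro hR
    refine ⟨R, ?_⟩
    ext1 x
    have hx : F.θτ (R x) = x := DFunLike.congr_fun hR x
    simp [hx]
  · rintro ⟨U, rfl⟩
    ext1 x
    simp [h]
end

section
/- Let (f, τ) be a p-ASF for X. A bounded linear operator L : ℓ^p(ℕ) → X satisfies L ∘ θ_f = I_X (i.e., L is a bounded left-inverse of θ_f) if and only if L = S_{f,τ}^{-1} ∘ θ_τ + V ∘ (I_{ℓ^p(ℕ)} − θ_f ∘ S_{f,τ}^{-1} ∘ θ_τ) for some bounded linear operator V : ℓ^p(ℕ) → X. -/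
open scoped ENNReal

/-- characterization of bounded left-inverses of `θ_f`. -/
theorem stmt_11 {X : Type*} [NormedAddCommGroup X] [NormedSpace ℝ X] [CompleteSpace X]
    (p : ℝ≥0∞) [Fact (1 ≤ p)] (hp : p ≠ ∞) (F : pASF p X)
    (L : lp (fun _ : ℕ => ℝ) p →L[ℝ] X) :
    L.comp F.θf = ContinuousLinearMap.id ℝ X ↔
    ∃ V : lp (fun _ : ℕ => ℝ) p →L[ℝ] X,
      L = (F.S.symm : X →L[ℝ] X).comp F.θτ +
        V.comp (ContinuousLinearMap.id ℝ (lp (fun _ : ℕ => ℝ) p) -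
          F.θf.comp ((F.S.symm : X →L[ℝ] X).comp F.θτ)) := by
  have key : ∀ x, F.θτ (F.θf x) = F.S x := by
    intro x
    have h := F.hθτ (F.θf x)
    simp only [F.hθf] at h
    exact h.unique (F.hS x)
  constructor
  · intro h
    refine ⟨L, ?_⟩
    ext1 a
    have h' := fun x => DFunLike.congr_fun h x
    simp only [ContinuousLinearMap.comp_apply, ContinuousLinearMap.id_apply] at h'
    simp [h']
  · rintro ⟨V, rfl⟩
    ext1 x
    simp [key]
end

section
/- Let (f, τ) be a p-ASF for X. Then a p-ASF (g, ω) for X is a dual of (f, τ) if and only if there exist bounded linear operators U : X → ℓ^p(ℕ) and V : ℓ^p(ℕ) → X such that g_n = f_n ∘ S_{f,τ}^{-1} + h_n ∘ U − f_n ∘ S_{f,τ}^{-1} ∘ θ_τ ∘ U and ω_n = S_{f,τ}^{-1}τ_n + V e_n − V θ_f S_{f,τ}^{-1}τ_n for all n ∈ ℕ, and the operator S_{f,τ}^{-1} + V ∘ U − V ∘ θ_f ∘ S_{f,τ}^{-1} ∘ θ_τ ∘ U : X → X is bounded invertible. -/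
open scoped ENNReal

theorem pASF.tf {p : ℝ≥0∞} [Fact (1 ≤ p)] {X : Type*} [NormedAddCommGroup X]
    [NormedSpace ℝ X] (F G : pASF p X) (x : X) :
    HasSum (fun n => G.f n x • F.τ n) (F.θτ (G.θf x)) := by
  simpa only [G.hθf] using F.hθτ (G.θf x)

theorem pASF.te {p : ℝ≥0∞} [Fact (1 ≤ p)] {X : Type*} [NormedAddCommGroup X]
    [NormedSpace ℝ X] (F : pASF p X) (n : ℕ) :
    F.θτ (lp.single p n 1) = F.τ n := by
  refine (F.hθτ _).unique ?_
  have h := hasSum_single (f := fun m => ((lp.single p n (1:ℝ) : lp (fun _ : ℕ => ℝ) p) : ℕ → ℝ) m • F.τ m) n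
    (fun m hm => by simp [lp.single_apply, hm])
  simpa using h

/-- full characterization of the dual p-ASFs of a p-ASF `(f, τ)`. -/
theorem stmt_12 {X : Type*} [NormedAddCommGroup X] [NormedSpace ℝ X] [CompleteSpace X]
    (p : ℝ≥0∞) [Fact (1 ≤ p)] (hp : p ≠ ∞) (F G : pASF p X) :
    F.IsDual G ↔
    ∃ (U : X →L[ℝ] lp (fun _ : ℕ => ℝ) p) (V : lp (fun _ : ℕ => ℝ) p →L[ℝ] X),
      (∀ (n : ℕ) (x : X),
        G.f n x = F.f n (F.S.symm x) + (U x : ℕ → ℝ) n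
          - F.f n (F.S.symm (F.θτ (U x)))) ∧
      (∀ n : ℕ,
        G.τ n = F.S.symm (F.τ n) + V (lp.single p n 1)
          - V (F.θf (F.S.symm (F.τ n)))) ∧
      (∃ W : X ≃L[ℝ] X,
        (W : X →L[ℝ] X) = (F.S.symm : X →L[ℝ] X) + V.comp U
          - V.comp (F.θf.comp ((F.S.symm : X →L[ℝ] X).comp (F.θτ.comp U)))) := by
  have hSF : ∀ F : pASF p X, ∀ x, F.θτ (F.θf x) = F.S x := fun F x => (F.tf F x).unique (F.hS x)
  constructor
  · intro h
    have h1 : ∀ x, F.θτ (G.θf x) = x := fun x => (F.tf G x).unique (h x).1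
    have h2 : ∀ x, G.θτ (F.θf x) = x := fun x => (G.tf F x).unique (h x).2
    refine ⟨G.θf, G.θτ, ?_, ?_, G.S, ?_⟩
    · intro n x
      rw [h1, G.hθf]; ring
    · intro n
      rw [h2, G.te]; abel
    · ext x
      simp [h1, h2, hSF]
  · rintro ⟨U, V, hg, hw, -⟩ x
    constructor
    · have hG : G.θf x = F.θf (F.S.symm x) + U x - F.θf (F.S.symm (F.θτ (U x))) := by
        ext n
        simp only [lp.coeFn_sub, lp.coeFn_add, Pi.sub_apply, Pi.add_apply, pASF.hθf, hg]
      have h := F.tf G x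
      rw [hG] at h
      simpa [hSF] using h
    · have a := (F.hS x).mapL (F.S.symm : X →L[ℝ] X)
      have b := (lp.hasSum_single hp (F.θf x)).mapL V
      have c := (F.hS x).mapL (V.comp (F.θf.comp (F.S.symm : X →L[ℝ] X)))
      have d := (a.add b).sub c
      convert d using 1
      · funext n
        have e : (lp.single p n ((F.θf x : ℕ → ℝ) n) : lp (fun _ : ℕ => ℝ) p)
            = F.f n x • lp.single p n 1 := by
          rw [F.hθf, ← lp.single_smul]; simp
        simp [hw, e, smul_add, smul_sub]
      · simp
end

section
/- Let (f, τ) and (g, ω) be two p-ASFs for X. Then the following are equivalent: (i) there exist bounded invertible operators T_{f,g}, T_{τ,ω} : X → X with g_n = f_n ∘ T_{f,g} and ω_n = T_{τ,ω}τ_n for all n ∈ ℕ; (ii) there exist bounded invertible operators T_{f,g}, T_{τ,ω} : X → X with θ_g = θ_f ∘ T_{f,g} and θ_ω = T_{τ,ω} ∘ θ_τ. Moreover, if these hold, the invertible operators are unique and are given by T_{f,g} = S_{f,τ}^{-1} ∘ θ_τ ∘ θ_g and T_{τ,ω} = θ_ω ∘ θ_f ∘ S_{f,τ}^{-1}. 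-/
open scoped ENNReal

/-- similarity of two p-ASFs is equivalent to the corresponding
operator equations on the analysis/synthesis operators; moreover the invertible
operators are unique and are given by `T_{f,g} = S⁻¹ ∘ θ_τ ∘ θ_g` and
`T_{τ,ω} = θ_ω ∘ θ_f ∘ S⁻¹`. -/
theorem stmt_13 {X : Type*} [NormedAddCommGroup X] [NormedSpace ℝ X] [CompleteSpace X]
    (p : ℝ≥0∞) [Fact (1 ≤ p)] (hp : p ≠ ∞) (F G : pASF p X) :
    ((∃ Tfg Tτω : X ≃L[ℝ] X,
        (∀ n, G.f n = (F.f n).comp (Tfg : X →L[ℝ] X)) ∧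
        (∀ n, G.τ n = Tτω (F.τ n))) ↔
     (∃ Tfg Tτω : X ≃L[ℝ] X,
        G.θf = F.θf.comp (Tfg : X →L[ℝ] X) ∧
        G.θτ = (Tτω : X →L[ℝ] X).comp F.θτ)) ∧
    (∀ Tfg Tτω : X ≃L[ℝ] X,
      ((∀ n, G.f n = (F.f n).comp (Tfg : X →L[ℝ] X)) ∧ (∀ n, G.τ n = Tτω (F.τ n))) →
        (Tfg : X →L[ℝ] X) = ((F.S.symm : X →L[ℝ] X).comp F.θτ).comp G.θf ∧
        (Tτω : X →L[ℝ] X) = (G.θτ.comp F.θf).comp (F.S.symm : X →L[ℝ] X)) ∧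
    (∀ Tfg Tτω : X ≃L[ℝ] X,
      (G.θf = F.θf.comp (Tfg : X →L[ℝ] X) ∧ G.θτ = (Tτω : X →L[ℝ] X).comp F.θτ) →
        (Tfg : X →L[ℝ] X) = ((F.S.symm : X →L[ℝ] X).comp F.θτ).comp G.θf ∧
        (Tτω : X →L[ℝ] X) = (G.θτ.comp F.θf).comp (F.S.symm : X →L[ℝ] X)) := by
  have hSF : ∀ x, F.θτ (F.θf x) = F.S x := fun x => by
    have h := F.hθτ (F.θf x)
    simp only [F.hθf] at h
    exact h.unique (F.hS x)
  have key1 : ∀ Tfg : X ≃L[ℝ] X, (∀ n, G.f n = (F.f n).comp (Tfg : X →L[ℝ] X)) ↔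
      G.θf = F.θf.comp (Tfg : X →L[ℝ] X) := by
    intro T
    constructor
    · intro h
      ext x n
      have h1 := G.hθf x n
      have h2 := F.hθf (T x) n
      rw [h n] at h1
      exact h1.trans h2.symm
    · intro h n
      ext x
      rw [← G.hθf x n, h]
      exact F.hθf (T x) n
  have hsingle : ∀ (H : pASF p X) (n : ℕ), H.θτ (lp.single p n (1 : ℝ)) = H.τ n := by
    intro H n
    have h1 := H.hθτ (lp.single p n (1 : ℝ))
    have h2 := hasSum_single (f := fun m =>
      ((lp.single p n (1 : ℝ) : lp (fun _ : ℕ => ℝ) p) : ℕ → ℝ) m • H.τ m) n (by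
        intro m hm
        simp [lp.single_apply, hm])
    have h3 := h1.unique h2
    simpa using h3
  have key2 : ∀ T : X ≃L[ℝ] X, (∀ n, G.τ n = T (F.τ n)) ↔
      G.θτ = (T : X →L[ℝ] X).comp F.θτ := by
    intro T
    constructor
    · intro h
      refine ContinuousLinearMap.ext fun a => ?_
      have h1 := G.hθτ a
      have h2 := (T : X →L[ℝ] X).hasSum (F.hθτ a)
      refine h1.unique ?_
      have h3 : (fun n => (a : ℕ → ℝ) n • G.τ n) =
          fun n => (T : X →L[ℝ] X) ((a : ℕ → ℝ) n • F.τ n) := by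
        funext n
        simp [h]
      rw [h3]
      exact h2
    · intro h n
      rw [← hsingle G n, ← hsingle F n, h]
      rfl
  have key3 : ∀ Tfg Tτω : X ≃L[ℝ] X,
      (G.θf = F.θf.comp (Tfg : X →L[ℝ] X) ∧ G.θτ = (Tτω : X →L[ℝ] X).comp F.θτ) →
        (Tfg : X →L[ℝ] X) = ((F.S.symm : X →L[ℝ] X).comp F.θτ).comp G.θf ∧
        (Tτω : X →L[ℝ] X) = (G.θτ.comp F.θf).comp (F.S.symm : X →L[ℝ] X) := by
    rintro T U ⟨h1, h2⟩
    constructor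
    · ext x
      simp [h1, hSF]
    · ext x
      simp [h2, hSF]
  simp only [key1, key2]
  exact ⟨trivial, key3, key3⟩
end

section
/- Let (f, τ) and (g, ω) be two p-ASFs for X, and set P_{f,τ} := θ_f ∘ S_{f,τ}^{-1} ∘ θ_τ and P_{g,ω} := θ_g ∘ S_{g,ω}^{-1} ∘ θ_ω. Then (f, τ) and (g, ω) are similar (i.e., there exist bounded invertible operators T_{f,g}, T_{τ,ω} : X → X with g_n = f_n ∘ T_{f,g} and ω_n = T_{τ,ω}τ_n for all n ∈ ℕ) if and only if P_{g,ω} = P_{f,τ}. -/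
open scoped ENNReal

lemma pASF.S_eq {X : Type*} [NormedAddCommGroup X] [NormedSpace ℝ X]
    {p : ℝ≥0∞} [Fact (1 ≤ p)] (F : pASF p X) (x : X) : F.θτ (F.θf x) = F.S x := by
  have h := F.hθτ (F.θf x)
  simp only [F.hθf] at h
  exact h.unique (F.hS x)

lemma pASF.exists_single {X : Type*} [NormedAddCommGroup X] [NormedSpace ℝ X]
    {p : ℝ≥0∞} [Fact (1 ≤ p)] (n : ℕ) :
    ∃ e : lp (fun _ : ℕ => ℝ) p, ∀ F : pASF p X, F.θτ e = F.τ n := by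
  refine ⟨lp.single p n (1 : ℝ), fun F => ?_⟩
  refine (F.hθτ _).unique ?_
  have h := hasSum_single (f := fun m => (lp.single p n (1 : ℝ) : ℕ → ℝ) m • F.τ m) n
    (fun m hm => by simp [lp.single_apply, hm])
  simpa using h

/-- two p-ASFs are similar iff their projections
`P = θ_f ∘ S⁻¹ ∘ θ_τ` coincide. -/
theorem stmt_14 {X : Type*} [NormedAddCommGroup X] [NormedSpace ℝ X] [CompleteSpace X]
    (p : ℝ≥0∞) [Fact (1 ≤ p)] (hp : p ≠ ∞) (F G : pASF p X) :
    (∃ Tfg Tτω : X ≃L[ℝ] X,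
        (∀ n, G.f n = (F.f n).comp (Tfg : X →L[ℝ] X)) ∧
        (∀ n, G.τ n = Tτω (F.τ n))) ↔
    G.θf.comp ((G.S.symm : X →L[ℝ] X).comp G.θτ) =
      F.θf.comp ((F.S.symm : X →L[ℝ] X).comp F.θτ) := by
  have SF : ∀ x, F.S.symm (F.θτ (F.θf x)) = x := fun x => by simp [F.S_eq]
  have SG : ∀ x, G.S.symm (G.θτ (G.θf x)) = x := fun x => by simp [G.S_eq]
  have SF' : ∀ x, F.θτ (F.θf (F.S.symm x)) = x := fun x => by simp [F.S_eq]
  have SG' : ∀ x, G.θτ (G.θf (G.S.symm x)) = x := fun x => by simp [G.S_eq]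
  constructor
  · rintro ⟨T, U, hT, hU⟩
    have h1 : ∀ x, G.θf x = F.θf (T x) := fun x => by
      ext n
      simp [G.hθf, F.hθf, hT]
    have h2 : ∀ a, G.θτ a = U (F.θτ a) := fun a => by
      refine (G.hθτ a).unique ?_
      have h := (F.hθτ a).mapL (U : X →L[ℝ] X)
      simpa [hU] using h
    ext1 a
    simp only [ContinuousLinearMap.comp_apply, ContinuousLinearEquiv.coe_coe]
    rw [h1]
    congr 1
    have h3 : ∀ y, G.S.symm (U (F.S (T y))) = y := fun y => by
      rw [← F.S_eq, ← h1, ← h2, SG]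
    have h4 := h3 (T.symm (F.S.symm (F.θτ a)))
    simp only [ContinuousLinearEquiv.apply_symm_apply] at h4
    rw [h2, h4, ContinuousLinearEquiv.apply_symm_apply]
  · intro h
    have hP : ∀ a, G.θf (G.S.symm (G.θτ a)) = F.θf (F.S.symm (F.θτ a)) :=
      fun a => congrArg (fun L => L a) h
    refine ⟨ContinuousLinearEquiv.equivOfInverse
        ((F.S.symm : X →L[ℝ] X).comp (F.θτ.comp G.θf))
        ((G.S.symm : X →L[ℝ] X).comp (G.θτ.comp F.θf)) ?_ ?_,
      ContinuousLinearEquiv.equivOfInverse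
        (G.θτ.comp (F.θf.comp (F.S.symm : X →L[ℝ] X)))
        (F.θτ.comp (G.θf.comp (G.S.symm : X →L[ℝ] X))) ?_ ?_, ?_, ?_⟩
    · intro x
      simp [← hP, SG]
    · intro x
      simp [hP, SF]
    · intro x
      simp only [ContinuousLinearMap.comp_apply, ContinuousLinearEquiv.coe_coe]
      rw [hP, SF, SF']
    · intro x
      simp only [ContinuousLinearMap.comp_apply, ContinuousLinearEquiv.coe_coe]
      rw [← hP, SG, SG']
    · intro n
      ext x
      simp [← F.hθf, ← G.hθf, ← hP, SG]
    · intro n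
      obtain ⟨e, he⟩ := pASF.exists_single (X := X) (p := p) n
      simp [← he, ← hP, SG']
end

section
/- Let (f, τ) be a Parseval p-ASF for X and let (g, ω) be a p-ASF similar to (f, τ) via bounded invertible operators T_{f,g}, T_{τ,ω} : X → X (so g_n = f_n ∘ T_{f,g} and ω_n = T_{τ,ω}τ_n for all n). Then (g, ω) is a Parseval p-ASF if and only if T_{τ,ω} ∘ T_{f,g} = I_X, which holds if and only if T_{f,g} ∘ T_{τ,ω} = I_X. -/
open scoped ENNReal

/-- if `(f, τ)` is a Parseval p-ASF and `(g, ω)` is similar to it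
via `T_{f,g}, T_{τ,ω}`, then `(g, ω)` is Parseval iff `T_{τ,ω} ∘ T_{f,g} = I_X`
iff `T_{f,g} ∘ T_{τ,ω} = I_X`. -/
theorem stmt_15 {X : Type*} [NormedAddCommGroup X] [NormedSpace ℝ X] [CompleteSpace X]
    (p : ℝ≥0∞) [Fact (1 ≤ p)] (hp : p ≠ ∞) (F G : pASF p X)
    (hPar : (F.S : X →L[ℝ] X) = ContinuousLinearMap.id ℝ X)
    (Tfg Tτω : X ≃L[ℝ] X)
    (hf : ∀ n, G.f n = (F.f n).comp (Tfg : X →L[ℝ] X))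
    (hτ : ∀ n, G.τ n = Tτω (F.τ n)) :
    (((G.S : X →L[ℝ] X) = ContinuousLinearMap.id ℝ X) ↔
      (Tτω : X →L[ℝ] X).comp (Tfg : X →L[ℝ] X) = ContinuousLinearMap.id ℝ X) ∧
    (((G.S : X →L[ℝ] X) = ContinuousLinearMap.id ℝ X) ↔
      (Tfg : X →L[ℝ] X).comp (Tτω : X →L[ℝ] X) = ContinuousLinearMap.id ℝ X) := by
  have hF : ∀ x, F.S x = x := fun x => by
    have := congrArg (fun T : X →L[ℝ] X => T x) hPar
    simpa using this
  have hG : ∀ x, G.S x = Tτω (Tfg x) := fun x => by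
    have h1 := (F.hS (Tfg x)).mapL (Tτω : X →L[ℝ] X)
    rw [hF] at h1
    refine (G.hS x).unique ?_
    simpa [hf, hτ] using h1
  have e1 : ((G.S : X →L[ℝ] X) = ContinuousLinearMap.id ℝ X) ↔ ∀ x, Tτω (Tfg x) = x := by
    simp [ContinuousLinearMap.ext_iff, hG]
  have e2 : (Tτω : X →L[ℝ] X).comp (Tfg : X →L[ℝ] X) = ContinuousLinearMap.id ℝ X ↔
      ∀ x, Tτω (Tfg x) = x := by
    simp [ContinuousLinearMap.ext_iff]
  have e3 : (Tfg : X →L[ℝ] X).comp (Tτω : X →L[ℝ] X) = ContinuousLinearMap.id ℝ X ↔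
      ∀ x, Tfg (Tτω x) = x := by
    simp [ContinuousLinearMap.ext_iff]
  rw [e1, e2, e3]
  exact ⟨Iff.rfl, fun h x => Tτω.injective (h (Tτω x)), fun h x => Tfg.injective (h (Tfg x))⟩
end

section
/- Let (f, τ) and (g, ω) be two Parseval p-ASFs for X which are orthogonal to each other. If A, B, C, D : X → X are bounded linear operators with C ∘ A + D ∘ B = I_X, then the pair ({f_n ∘ A + g_n ∘ B}_n, {Cτ_n + Dω_n}_n) is a Parseval p-ASF for X. In particular, if scalars a, b, c, d satisfy ca + db = 1, then ({a f_n + b g_n}_n, {c τ_n + d ω_n}_n) is a Parseval p-ASF for X. -/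
open scoped ENNReal

/-- `G` is orthogonal to `F`: `0 = ∑ G.f n x • F.τ n = ∑ F.f n x • G.τ n`. -/
def pASF.IsOrthogonal {p : ℝ≥0∞} [Fact (1 ≤ p)] {X : Type*} [NormedAddCommGroup X]
    [NormedSpace ℝ X] (F G : pASF p X) : Prop :=
  ∀ x : X, HasSum (fun n => G.f n x • F.τ n) (0 : X) ∧
    HasSum (fun n => F.f n x • G.τ n) (0 : X)

/-- interpolation of two orthogonal Parseval p-ASFs: if
`C ∘ A + D ∘ B = I_X` then `({f n ∘ A + g n ∘ B}, {C τ n + D ω n})` is a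
Parseval p-ASF; in particular for scalars with `c·a + d·b = 1`,
`({a f n + b g n}, {c τ n + d ω n})` is a Parseval p-ASF. -/
theorem stmt_17 {X : Type*} [NormedAddCommGroup X] [NormedSpace ℝ X] [CompleteSpace X]
    (p : ℝ≥0∞) [Fact (1 ≤ p)] (hp : p ≠ ∞) (F G : pASF p X)
    (hFPar : (F.S : X →L[ℝ] X) = ContinuousLinearMap.id ℝ X)
    (hGPar : (G.S : X →L[ℝ] X) = ContinuousLinearMap.id ℝ X)
    (horth : F.IsOrthogonal G) :
    (∀ A B C D : X →L[ℝ] X, C.comp A + D.comp B = ContinuousLinearMap.id ℝ X →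
      ∃ H : pASF p X,
        (H.S : X →L[ℝ] X) = ContinuousLinearMap.id ℝ X ∧
        (∀ n, H.f n = (F.f n).comp A + (G.f n).comp B) ∧
        (∀ n, H.τ n = C (F.τ n) + D (G.τ n))) ∧
    (∀ a b c d : ℝ, c * a + d * b = 1 →
      ∃ H : pASF p X,
        (H.S : X →L[ℝ] X) = ContinuousLinearMap.id ℝ X ∧
        (∀ n, H.f n = a • F.f n + b • G.f n) ∧
        (∀ n, H.τ n = c • F.τ n + d • G.τ n)) := by
  have key : ∀ A B C D : X →L[ℝ] X, C.comp A + D.comp B = ContinuousLinearMap.id ℝ X →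
      ∃ H : pASF p X,
        (H.S : X →L[ℝ] X) = ContinuousLinearMap.id ℝ X ∧
        (∀ n, H.f n = (F.f n).comp A + (G.f n).comp B) ∧
        (∀ n, H.τ n = C (F.τ n) + D (G.τ n)) := by
    intro A B C D h
    have hF : ∀ x, HasSum (fun n => F.f n x • F.τ n) x := fun x => by
      have h1 : F.S x = x := DFunLike.congr_fun hFPar x
      have h2 := F.hS x
      rwa [h1] at h2
    have hG : ∀ x, HasSum (fun n => G.f n x • G.τ n) x := fun x => by
      have h1 : G.S x = x := DFunLike.congr_fun hGPar x
      have h2 := G.hS x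
      rwa [h1] at h2
    refine ⟨{ f := fun n => (F.f n).comp A + (G.f n).comp B
              τ := fun n => C (F.τ n) + D (G.τ n)
              S := ContinuousLinearEquiv.refl ℝ X
              hS := ?_
              θf := F.θf.comp A + G.θf.comp B
              hθf := ?_
              θτ := C.comp F.θτ + D.comp G.θτ
              hθτ := ?_ }, rfl, fun _ => rfl, fun _ => rfl⟩
    · intro x
      have e : C (A x) + D (B x) = x := DFunLike.congr_fun h x
      have h1 := C.hasSum ((hF (A x)).add (horth (B x)).1)
      have h2 := D.hasSum ((horth (A x)).2.add (hG (B x)))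
      have h3 := h1.add h2
      simp only [add_zero, zero_add, e] at h3
      convert h3 using 2 with n
      simp [add_smul, smul_add]
      abel
    · intro x n
      simp [F.hθf, G.hθf]
    · intro a
      have h3 := (C.hasSum (F.hθτ a)).add (D.hasSum (G.hθτ a))
      convert h3 using 2 with n
      · simp
      · rfl
  refine ⟨key, ?_⟩
  intro a b c d h
  obtain ⟨H, h1, h2, h3⟩ := key (a • ContinuousLinearMap.id ℝ X) (b • ContinuousLinearMap.id ℝ X)
    (c • ContinuousLinearMap.id ℝ X) (d • ContinuousLinearMap.id ℝ X) (by
      ext x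
      simp [smul_smul, ← add_smul]
      rw [mul_comm a c, mul_comm b d, h, one_smul])
  refine ⟨H, h1, fun n => ?_, fun n => ?_⟩
  · rw [h2]
    ext x
    simp
  · rw [h3]
    simp
end

section
/- Let (f, τ) be a p-ASF for X. If a p-ASF (g, ω) for X is both a dual of (f, τ) and similar to (f, τ), then (g, ω) is the canonical dual of (f, τ); that is, g_n = f_n ∘ S_{f,τ}^{-1} and ω_n = S_{f,τ}^{-1}τ_n for all n ∈ ℕ. Hence the canonical dual is the only dual p-ASF that is similar to (f, τ). -/
open scoped ENNReal

/-- the canonical dual is the only dual p-ASF similar to `(f, τ)`: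
if `(g, ω)` is a dual of `(f, τ)` and similar to it, then `g n = f n ∘ S⁻¹` and
`ω n = S⁻¹ (τ n)` for all `n`. -/
theorem stmt_18 {X : Type*} [NormedAddCommGroup X] [NormedSpace ℝ X] [CompleteSpace X]
    (p : ℝ≥0∞) [Fact (1 ≤ p)] (hp : p ≠ ∞) (F G : pASF p X)
    (hdual : F.IsDual G)
    (hsim : ∃ Tfg Tτω : X ≃L[ℝ] X,
      (∀ n, G.f n = (F.f n).comp (Tfg : X →L[ℝ] X)) ∧
      (∀ n, G.τ n = Tτω (F.τ n))) :
    (∀ n, G.f n = (F.f n).comp (F.S.symm : X →L[ℝ] X)) ∧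
    (∀ n, G.τ n = F.S.symm (F.τ n)) := by
  obtain ⟨T, U, hT, hU⟩ := hsim
  have h1 : ∀ x, T x = F.S.symm x := by
    intro x
    have h := (hdual x).1
    simp only [hT] at h
    have h2 := (F.hS (T x)).unique h
    exact (F.S.symm_apply_eq.mpr h2.symm).symm
  have h3 : ∀ x, U (F.S x) = x := by
    intro x
    have h := (hdual x).2
    simp only [hU] at h
    have h2 := (F.hS x).mapL (U : X →L[ℝ] X)
    simp only [map_smul, ContinuousLinearEquiv.coe_coe] at h2
    exact h2.unique h
  refine ⟨fun n => ?_, fun n => ?_⟩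
  · rw [hT n]
    ext x
    simp [h1]
  · rw [hU n]
    have h := h3 (F.S.symm (F.τ n))
    simpa using h
end

section
/- If two p-ASFs (f, τ) and (g, ω) for X are similar, then they are not orthogonal; in particular θ_τ ∘ θ_g ≠ 0. -/
open scoped ENNReal

/-- two similar p-ASFs are never orthogonal; in particular
`θ_τ ∘ θ_g ≠ 0`. -/
theorem stmt_19 {X : Type*} [NormedAddCommGroup X] [NormedSpace ℝ X] [CompleteSpace X]
    [Nontrivial X]
    (p : ℝ≥0∞) [Fact (1 ≤ p)] (hp : p ≠ ∞) (F G : pASF p X)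
    (hsim : ∃ Tfg Tτω : X ≃L[ℝ] X,
      (∀ n, G.f n = (F.f n).comp (Tfg : X →L[ℝ] X)) ∧
      (∀ n, G.τ n = Tτω (F.τ n))) :
    ¬ F.IsOrthogonal G ∧ F.θτ.comp G.θf ≠ 0 := by
  obtain ⟨T, -, hT, -⟩ := hsim
  have key : ∀ x, HasSum (fun n => G.f n x • F.τ n) (F.S (T x)) := by
    intro x
    have h := F.hS (T x)
    simpa [hT] using h
  obtain ⟨y, hy⟩ := exists_ne (0 : X)
  have hne : F.S (T y) ≠ 0 := by
    simpa using hy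
  refine ⟨fun h => hne ((key y).unique (h y).1), fun h => hne ?_⟩
  have h1 := F.hθτ (G.θf y)
  simp only [G.hθf] at h1
  rw [(key y).unique h1]
  exact congrArg (fun L : X →L[ℝ] X => L y) h
end
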